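/- Let 1 ≤ q < ∞, let r ∈ ℕ, and let s ∈ ℝ with s > r^{q−1}. Let T be the infinite unrooted leafless directed tree in which every vertex has outdegree exactly r. Fix a vertex w*, let H = {w ∈ V : w ∈ child^n(parent^n(w*)) for some n ∈ ℕ}, and for each u ∈ V set λ_u = s^{−d} where d = dist(u,H) is the distance from u to the set H in the underlying undirected graph. Then the backward shift B : L^q(T,λ) → L^q(T,λ) is hypercyclic. -/

import Mathlib

open Filter

attribute [local instance] Classical.propDecidable
open scoped ENNReal

/-- A directed tree: a locally finite directed graph on a (countably infinite)
vertex set with no directed circuits, whose underlying undirected graph is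
connected, and in which every vertex has indegree at most one. -/
structure DirTree (V : Type) where
  E : V → V → Prop
  finIn : ∀ v : V, {u : V | E u v}.Finite
  finOut : ∀ v : V, {u : V | E v u}.Finite
  noCircuit : ∀ (n : ℕ) (c : Fin (n + 1) → V), Function.Injective c →
    (∀ i : Fin n, E (c i.castSucc) (c i.succ)) → ¬ E (c (Fin.last n)) (c 0)
  conn : (SimpleGraph.fromRel E).Connected
  indeg : ∀ ⦃u w v : V⦄, E u v → E w v → u = w

namespace DirTree

variable {V : Type} (T : DirTree V)

/-- A root is a vertex of indegree zero. -/
def IsRoot (r : V) : Prop := ∀ u : V, ¬ T.E u r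

/-- The set of children of a vertex. -/
def child (u : V) : Set V := {v : V | T.E u v}

/-- A leaf is a vertex of outdegree zero. -/
def IsLeaf (u : V) : Prop := ¬ (T.child u).Nonempty

/-- The (forward) shift `(S f)(v) = f (parent v)`, with `(S f)(root) = 0`. -/
noncomputable def shift (f : V → ℂ) (v : V) : ℂ :=
  if h : ∃ u : V, T.E u v then f h.choose else 0

/-- The backward shift `(B f)(u) = ∑_{v ∈ child u} f v`. -/
noncomputable def bwd (f : V → ℂ) (u : V) : ℂ :=
  ∑' v : T.child u, f v.1

/-- The operator `(S* g)(u) = ∑_{v ∈ child u} g v · λ_v / λ_u`. -/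
noncomputable def sstar (lam : V → ℝ) (g : V → ℂ) (u : V) : ℂ :=
  ∑' v : T.child u, g v.1 * ((lam v.1 / lam u : ℝ) : ℂ)

/-- `childN n u` is the set of vertices `v` with `parentⁿ v = u`. -/
def childN (T : DirTree V) : ℕ → V → Set V
  | 0, u => {u}
  | n + 1, u => {w : V | ∃ v ∈ T.child u, w ∈ childN T n v}

/-- `γ(u,n)`, the cardinality of `childN n u`. -/
noncomputable def gam (u : V) (n : ℕ) : ℕ := (T.childN n u).ncard

/-- The `n`-th ancestor `parentⁿ u` of `u` (junk value `u` if it does not exist). -/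
noncomputable def anc (u : V) (n : ℕ) : V :=
  if h : ∃ w : V, u ∈ T.childN n w then h.choose else u

/-- A leafless directed tree has a free end if some vertex is such that all of
its descendants have outdegree one. -/
def FreeEnd : Prop :=
  ∃ w : V, ∀ n : ℕ, 0 < n → ∀ v ∈ T.childN n w, (T.child v).ncard = 1

end DirTree

/-- Membership in the weighted space `L^p(T,λ)`. -/
def MemLp' {V : Type} (lam : V → ℝ) (p : ℝ) (f : V → ℂ) : Prop :=
  Summable (fun v => ‖f v‖ ^ p * lam v)

/-- The norm of the weighted space `L^p(T,λ)`. -/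
noncomputable def pNorm {V : Type} (lam : V → ℝ) (p : ℝ) (f : V → ℂ) : ℝ :=
  (∑' v, ‖f v‖ ^ p * lam v) ^ (1 / p)

/-- Boundedness of an operator on `L^p(T,λ)`. -/
def BoundedOn {V : Type} (lam : V → ℝ) (p : ℝ) (A : (V → ℂ) → (V → ℂ)) : Prop :=
  ∃ C : ℝ, 0 ≤ C ∧ ∀ f : V → ℂ, MemLp' lam p f →
    MemLp' lam p (A f) ∧ pNorm lam p (A f) ≤ C * pNorm lam p f

/-- Hypercyclicity of an operator on `L^p(T,λ)`: some `f ∈ L^p(T,λ)` has dense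
orbit `{Aⁿ f : n ∈ ℕ}`. -/
def Hypercyclic {V : Type} (lam : V → ℝ) (p : ℝ) (A : (V → ℂ) → (V → ℂ)) : Prop :=
  ∃ f : V → ℂ, MemLp' lam p f ∧ ∀ g : V → ℂ, MemLp' lam p g → ∀ ε : ℝ, 0 < ε →
    ∃ n : ℕ, MemLp' lam p (A^[n] f - g) ∧ pNorm lam p (A^[n] f - g) < ε

/-- The distance from a vertex to a set of vertices in a graph. -/
noncomputable def distToSet {V : Type} (G : SimpleGraph V) (H : Set V) (u : V) : ℕ :=
  sInf ((fun w => G.dist u w) '' H)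

/-!
The shift moves point masses along the tree, `B δ_v = δ_{parent v}`, and `‖δ_v‖^q = λ_v`. Fix the
level function `ℓ` with `ℓ(w*) = 0` and `ℓ(parent v) = ℓ(v) - 1`. It vanishes on `H` and changes by
one along each edge, so `dist(v, H) ≥ |ℓ(v)|`. As `s > 1`, the norms of `δ_v` tend to `0` both along
the ancestors of `v`, which form the forward orbit of `δ_v`, and along any sequence of `n`-th
generation descendants, which are preimages of `δ_v` under `Bⁿ`. Point masses span a dense subspace,
so Kitai's criterion applies.
-/

open scoped Topology

section Universality

theorem exists_dense_range_of_transitive {ι X Y : Type*} [TopologicalSpace X] [BaireSpace X]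
    [Nonempty X] [TopologicalSpace Y] [SecondCountableTopology Y] {f : ι → X → Y}
    (hf : ∀ i, Continuous (f i))
    (htrans : ∀ (U : Set X) (W : Set Y), IsOpen U → U.Nonempty → IsOpen W → W.Nonempty →
      ∃ i, (U ∩ f i ⁻¹' W).Nonempty) :
    ∃ x, Dense (Set.range fun i => f i x) := by
  have hbasis := TopologicalSpace.isBasis_countableBasis Y
  have hdense : Dense (⋂ W ∈ TopologicalSpace.countableBasis Y, ⋃ i, f i ⁻¹' W) := by
    refine dense_biInter_of_isOpen
      (fun W hW => isOpen_iUnion fun i => (hbasis.isOpen hW).preimage (hf i))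
      (TopologicalSpace.countable_countableBasis Y) fun W hW => ?_
    rw [dense_iff_inter_open]
    intro U hU hU_ne
    obtain ⟨i, x, hxU, hxW⟩ := htrans U W hU hU_ne (hbasis.isOpen hW)
      (TopologicalSpace.nonempty_of_mem_countableBasis hW)
    exact ⟨x, hxU, Set.mem_iUnion.2 ⟨i, hxW⟩⟩
  obtain ⟨x, hx⟩ := hdense.nonempty
  refine ⟨x, hbasis.dense_iff.2 fun W hW _ => ?_⟩
  obtain ⟨i, hi⟩ := Set.mem_iUnion.1 (Set.mem_iInter₂.1 hx W hW)
  exact ⟨f i x, hi, i, rfl⟩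

end Universality

section Kitai

/-- `x` has `n`-th preimages under `A`, one for each `n`, that tend to zero: the backward half of
Kitai's hypercyclicity criterion. -/
def HasVanishingPreimages {X : Type*} [TopologicalSpace X] [Zero X] (A : X → X) (x : X) : Prop :=
  ∃ R : ℕ → X, Tendsto R atTop (𝓝 0) ∧ ∀ n, A^[n] (R n) = x

variable {𝕜 X : Type*} [Semiring 𝕜] [TopologicalSpace X] [AddCommMonoid X] [ContinuousAdd X]
  [Module 𝕜 X] [ContinuousConstSMul 𝕜 X] {A : X →ₗ[𝕜] X} {S : Set X} {x : X}

theorem tendsto_iterate_zero_of_mem_span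
    (hS : ∀ y ∈ S, Tendsto (fun n => A^[n] y) atTop (𝓝 0)) (hx : x ∈ Submodule.span 𝕜 S) :
    Tendsto (fun n => A^[n] x) atTop (𝓝 0) := by
  induction hx using Submodule.span_induction with
  | mem y hy => exact hS y hy
  | zero => simp only [iterate_map_zero, tendsto_const_nhds]
  | add y z _ _ hy hz => simpa only [iterate_map_add, add_zero] using hy.add hz
  | smul c y _ hy =>
    simpa only [← Module.End.pow_apply, map_smul, smul_zero] using hy.const_smul c

theorem hasVanishingPreimages_of_mem_span
    (hS : ∀ y ∈ S, HasVanishingPreimages A y) (hx : x ∈ Submodule.span 𝕜 S) :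
    HasVanishingPreimages A x := by
  induction hx using Submodule.span_induction with
  | mem y hy => exact hS y hy
  | zero => exact ⟨fun _ => 0, tendsto_const_nhds, iterate_map_zero A⟩
  | add y z _ _ hy hz =>
    obtain ⟨R, hR, hRy⟩ := hy
    obtain ⟨Q, hQ, hQz⟩ := hz
    exact ⟨fun n => R n + Q n, by simpa only [add_zero] using hR.add hQ,
      fun n => by rw [iterate_map_add, hRy, hQz]⟩
  | smul c y _ hy =>
    obtain ⟨R, hR, hRy⟩ := hy
    refine ⟨fun n => c • R n, by simpa only [smul_zero] using hR.const_smul c, fun n => ?_⟩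
    rw [← Module.End.pow_apply, map_smul, Module.End.pow_apply, hRy]

theorem exists_dense_orbit_of_kitai [BaireSpace X] [SecondCountableTopology X] (A : X →L[𝕜] X)
    (hS : Dense (Submodule.span 𝕜 S : Set X))
    (hfwd : ∀ y ∈ S, Tendsto (fun n => A^[n] y) atTop (𝓝 0))
    (hbwd : ∀ y ∈ S, HasVanishingPreimages A y) :
    ∃ x, Dense (Set.range fun n => A^[n] x) := by
  refine exists_dense_range_of_transitive (fun n => A.continuous.iterate n)
    fun U W hU hU_ne hW hW_ne => ?_
  obtain ⟨u, huU, hu⟩ := hS.inter_open_nonempty U hU hU_ne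
  obtain ⟨w, hwW, hw⟩ := hS.inter_open_nonempty W hW hW_ne
  obtain ⟨R, hR, hRw⟩ := hasVanishingPreimages_of_mem_span (A := A.toLinearMap) hbwd hw
  have hu_lim : Tendsto (fun n => u + R n) atTop (𝓝 u) := by
    simpa only [add_zero] using hR.const_add u
  have hw_lim : Tendsto (fun n => A^[n] (u + R n)) atTop (𝓝 w) := by
    have hAu : Tendsto (fun n => A^[n] u) atTop (𝓝 0) :=
      tendsto_iterate_zero_of_mem_span (A := A.toLinearMap) hfwd hu
    have hAR (n : ℕ) : A^[n] (u + R n) = A^[n] u + w := by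
      rw [iterate_map_add]
      exact congrArg _ (hRw n)
    simpa only [hAR, zero_add] using hAu.add_const w
  obtain ⟨n, hnU, hnW⟩ := ((hu_lim.eventually (hU.mem_nhds huU)).and
    (hw_lim.eventually (hW.mem_nhds hwW))).exists
  exact ⟨n, u + R n, hnU, hnW⟩

end Kitai

section LpSingle

variable {ι 𝕜 : Type*} [NormedField 𝕜] {P : ℝ≥0∞} [Fact (1 ≤ P)]

theorem dense_span_range_lp_single [DecidableEq ι] (hP : P ≠ ∞) {c : ι → 𝕜} (hc : ∀ i, c i ≠ 0) :
    Dense (Submodule.span 𝕜 (Set.range fun i => lp.single (E := fun _ => 𝕜) P i (c i)) :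
      Set (lp (fun _ : ι => 𝕜) P)) := by
  intro x
  refine mem_closure_of_tendsto (lp.hasSum_single hP x)
    (Eventually.of_forall fun t => Submodule.sum_mem _ fun i _ => ?_)
  have hxi : lp.single P i (x i) = (x i / c i) • lp.single (E := fun _ => 𝕜) P i (c i) := by
    rw [← lp.single_smul, smul_eq_mul, div_mul_cancel₀ _ (hc i)]
  rw [hxi]
  exact Submodule.smul_mem _ _ (Submodule.subset_span ⟨i, rfl⟩)

theorem secondCountableTopology_lp [Countable ι]
    [TopologicalSpace.SeparableSpace 𝕜] (hP : P ≠ ∞) :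
    SecondCountableTopology (lp (fun _ : ι => 𝕜) P) := by
  have hdense := dense_span_range_lp_single (ι := ι) (𝕜 := 𝕜) hP (c := 1) fun _ => one_ne_zero
  have : TopologicalSpace.SeparableSpace (lp (fun _ : ι => 𝕜) P) := by
    rw [← TopologicalSpace.isSeparable_univ_iff, ← hdense.closure_eq]
    exact (Set.countable_range _).isSeparable.span.closure
  exact UniformSpace.secondCountable_of_separable _

end LpSingle

section WeightedSpace

variable {V : Type} {lam : V → ℝ} {p : ℝ}

/-- Division by `λ^{1/p}`, which for positive `λ` maps the unweighted `ℓᵖ(V)` isometrically onto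
`L^p(T,λ)`; it gives access to the Banach space structure of Mathlib's `lp`. -/
noncomputable def weightedOfLp (lam : V → ℝ) (p : ℝ) :
    lp (fun _ : V => ℂ) (ENNReal.ofReal p) →ₗ[ℂ] V → ℂ where
  toFun x v := x v / ((lam v ^ (1 / p) : ℝ) : ℂ)
  map_add' x y := funext fun v => add_div (x v) (y v) _
  map_smul' c x := funext fun v => mul_div_assoc c (x v) _

theorem ofReal_weight_rpow_ne_zero (hlam : ∀ v, 0 < lam v) (v : V) :
    ((lam v ^ (1 / p) : ℝ) : ℂ) ≠ 0 :=
  Complex.ofReal_ne_zero.2 (Real.rpow_pos_of_pos (hlam v) _).ne'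

theorem norm_mul_weight_rpow (hp : p ≠ 0) (hlam : ∀ v, 0 ≤ lam v) (z : ℂ) (v : V) :
    ‖z * ((lam v ^ (1 / p) : ℝ) : ℂ)‖ ^ p = ‖z‖ ^ p * lam v := by
  have hroot : 0 ≤ lam v ^ (1 / p) := Real.rpow_nonneg (hlam v) _
  rw [norm_mul, Complex.norm_of_nonneg hroot, Real.mul_rpow (norm_nonneg z) hroot,
    ← Real.rpow_mul (hlam v), one_div_mul_cancel hp, Real.rpow_one]

theorem norm_weightedOfLp_rpow_mul (hp : p ≠ 0) (hlam : ∀ v, 0 < lam v)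
    (x : lp (fun _ : V => ℂ) (ENNReal.ofReal p)) (v : V) :
    ‖weightedOfLp lam p x v‖ ^ p * lam v = ‖x v‖ ^ p := by
  rw [← norm_mul_weight_rpow hp (fun v => (hlam v).le)]
  exact congrArg (‖·‖ ^ p) (div_mul_cancel₀ _ (ofReal_weight_rpow_ne_zero hlam v))

theorem weightedOfLp_injective (hlam : ∀ v, 0 < lam v) :
    Function.Injective (weightedOfLp lam p) := fun _ _ hxy =>
  lp.ext <| funext fun v => (div_left_inj' (ofReal_weight_rpow_ne_zero hlam v)).1 (congrFun hxy v)

theorem weightedOfLp_single (hlam : ∀ v, 0 < lam v) (v : V) :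
    weightedOfLp lam p (lp.single _ v ((lam v ^ (1 / p) : ℝ) : ℂ)) = Pi.single v 1 := by
  funext u
  change Pi.single (M := fun _ => ℂ) v _ u / _ = _
  obtain rfl | huv := eq_or_ne u v
  · rw [Pi.single_eq_same, Pi.single_eq_same, div_self (ofReal_weight_rpow_ne_zero hlam u)]
  · rw [Pi.single_eq_of_ne huv, Pi.single_eq_of_ne huv, zero_div]

theorem memLp'_weightedOfLp (hp : 0 < p) (hlam : ∀ v, 0 < lam v)
    (x : lp (fun _ : V => ℂ) (ENNReal.ofReal p)) : MemLp' lam p (weightedOfLp lam p x) := by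
  have hpP : (ENNReal.ofReal p).toReal = p := ENNReal.toReal_ofReal hp.le
  have hx := (memℓp_gen_iff (hpP.symm ▸ hp)).1 (lp.memℓp x)
  simpa only [MemLp', norm_weightedOfLp_rpow_mul hp.ne' hlam, hpP] using hx

theorem pNorm_weightedOfLp (hp : 0 < p) (hlam : ∀ v, 0 < lam v)
    (x : lp (fun _ : V => ℂ) (ENNReal.ofReal p)) : pNorm lam p (weightedOfLp lam p x) = ‖x‖ := by
  have hpP : (ENNReal.ofReal p).toReal = p := ENNReal.toReal_ofReal hp.le
  simp only [pNorm, norm_weightedOfLp_rpow_mul hp.ne' hlam,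
    lp.norm_eq_tsum_rpow (hpP.symm ▸ hp : 0 < (ENNReal.ofReal p).toReal), hpP]

theorem MemLp'.exists_weightedOfLp_eq (hp : 0 < p) (hlam : ∀ v, 0 < lam v) {f : V → ℂ}
    (hf : MemLp' lam p f) : ∃ x, weightedOfLp lam p x = f := by
  have hpP : (ENNReal.ofReal p).toReal = p := ENNReal.toReal_ofReal hp.le
  have hmem : Memℓp (fun v => f v * ((lam v ^ (1 / p) : ℝ) : ℂ)) (ENNReal.ofReal p) := by
    rw [memℓp_gen_iff (hpP.symm ▸ hp)]
    simpa only [MemLp', hpP, norm_mul_weight_rpow hp.ne' fun v => (hlam v).le] using hf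
  exact ⟨⟨_, hmem⟩, funext fun v => mul_div_cancel_right₀ _ (ofReal_weight_rpow_ne_zero hlam v)⟩

theorem BoundedOn.exists_semiconj [Fact (1 ≤ ENNReal.ofReal p)] (hlam : ∀ v, 0 < lam v)
    {A : (V → ℂ) →ₗ[ℂ] V → ℂ} (hA : BoundedOn lam p A) :
    ∃ A' : lp (fun _ : V => ℂ) (ENNReal.ofReal p) →L[ℂ] lp (fun _ : V => ℂ) (ENNReal.ofReal p),
      Function.Semiconj (weightedOfLp lam p) A' A := by
  have hp : 0 < p := one_pos.trans_le (ENNReal.one_le_ofReal.1 Fact.out)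
  obtain ⟨C, -, hC⟩ := hA
  let e := LinearEquiv.ofInjective _ (weightedOfLp_injective (p := p) hlam)
  let L := e.symm.toLinearMap ∘ₗ (A ∘ₗ weightedOfLp lam p).codRestrict _ fun x =>
    (hC _ (memLp'_weightedOfLp hp hlam x)).1.exists_weightedOfLp_eq hp hlam
  have hL : Function.Semiconj (weightedOfLp lam p) L A := fun x =>
    congrArg Subtype.val (e.apply_symm_apply _)
  refine ⟨L.mkContinuous C fun x => ?_, hL⟩
  rw [← pNorm_weightedOfLp hp hlam, ← pNorm_weightedOfLp hp hlam, hL]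
  exact (hC _ (memLp'_weightedOfLp hp hlam x)).2

theorem hypercyclic_of_semiconj [Fact (1 ≤ ENNReal.ofReal p)] (hlam : ∀ v, 0 < lam v)
    {A : (V → ℂ) → V → ℂ} {A' : lp (fun _ : V => ℂ) (ENNReal.ofReal p) → lp (fun _ : V => ℂ) _}
    (hA : Function.Semiconj (weightedOfLp lam p) A' A) {x : lp (fun _ : V => ℂ) _}
    (hx : Dense (Set.range fun n => A'^[n] x)) : Hypercyclic lam p A := by
  have hp : 0 < p := one_pos.trans_le (ENNReal.one_le_ofReal.1 Fact.out)
  refine ⟨weightedOfLp lam p x, memLp'_weightedOfLp hp hlam x, fun g hg ε hε => ?_⟩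
  obtain ⟨y, rfl⟩ := hg.exists_weightedOfLp_eq hp hlam
  obtain ⟨_, ⟨n, rfl⟩, hn⟩ := hx.exists_dist_lt y hε
  rw [dist_comm, dist_eq_norm] at hn
  have hdiff : A^[n] (weightedOfLp lam p x) - weightedOfLp lam p y =
      weightedOfLp lam p (A'^[n] x - y) := by
    rw [map_sub, hA.iterate_right n x]
  refine ⟨n, ?_, ?_⟩ <;> rw [hdiff]
  · exact memLp'_weightedOfLp hp hlam _
  · rwa [pNorm_weightedOfLp hp hlam]

theorem memLp'_single (hp : p ≠ 0) (v : V) : MemLp' lam p (Pi.single v 1) :=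
  summable_of_ne_finset_zero (s := {v}) fun u hu => by
    rw [Pi.single_eq_of_ne (Finset.notMem_singleton.1 hu), norm_zero, Real.zero_rpow hp, zero_mul]

theorem pNorm_single (hp : p ≠ 0) (v : V) : pNorm lam p (Pi.single v 1) = lam v ^ (1 / p) := by
  rw [pNorm, tsum_eq_single v fun u hu => by
    rw [Pi.single_eq_of_ne hu, norm_zero, Real.zero_rpow hp, zero_mul]]
  rw [Pi.single_eq_same, norm_one, Real.one_rpow, one_mul]

theorem tendsto_pNorm_single (hp : 0 < p) {g : ℕ → V}
    (hg : Tendsto (fun n => lam (g n)) atTop (𝓝 0)) :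
    Tendsto (fun n => pNorm lam p (Pi.single (g n) 1)) atTop (𝓝 0) := by
  have hroot : 0 < 1 / p := one_div_pos.2 hp
  simpa only [pNorm_single hp.ne', Real.zero_rpow hroot.ne'] using
    hg.rpow_const (p := 1 / p) (Or.inr hroot.le)

theorem hypercyclic_of_tendsto_pNorm_single [Countable V] (hp : 1 ≤ p) (hlam : ∀ v, 0 < lam v)
    {A : (V → ℂ) →ₗ[ℂ] V → ℂ} (hA : BoundedOn lam p A)
    (hfwd : ∀ v, Tendsto (fun n => pNorm lam p (A^[n] (Pi.single v 1))) atTop (𝓝 0))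
    (hbwd : ∀ v, ∃ R : ℕ → V → ℂ, (∀ n, MemLp' lam p (R n)) ∧
      Tendsto (fun n => pNorm lam p (R n)) atTop (𝓝 0) ∧ ∀ n, A^[n] (R n) = Pi.single v 1) :
    Hypercyclic lam p A := by
  have hp0 : 0 < p := one_pos.trans_le hp
  have : Fact (1 ≤ ENNReal.ofReal p) := ⟨ENNReal.one_le_ofReal.2 hp⟩
  have := secondCountableTopology_lp (ι := V) (𝕜 := ℂ) (ENNReal.ofReal_ne_top (r := p))
  obtain ⟨A', hA'⟩ := hA.exists_semiconj hlam
  obtain ⟨x, hx⟩ := exists_dense_orbit_of_kitai A'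
    (dense_span_range_lp_single ENNReal.ofReal_ne_top (ofReal_weight_rpow_ne_zero (p := p) hlam))
    (by
      rintro _ ⟨v, rfl⟩
      rw [tendsto_zero_iff_norm_tendsto_zero]
      simpa only [← pNorm_weightedOfLp hp0 hlam, (hA'.iterate_right _).eq,
        weightedOfLp_single hlam] using hfwd v)
    (by
      rintro _ ⟨v, rfl⟩
      obtain ⟨R, hR, hR_lim, hRv⟩ := hbwd v
      choose y hy using fun n => (hR n).exists_weightedOfLp_eq hp0 hlam
      refine ⟨y, ?_, fun n => weightedOfLp_injective hlam ?_⟩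
      · rw [tendsto_zero_iff_norm_tendsto_zero]
        simpa only [← pNorm_weightedOfLp hp0 hlam, hy] using hR_lim
      · rw [hA'.iterate_right n, hy, hRv, weightedOfLp_single hlam])
  exact hypercyclic_of_semiconj hlam hA' hx

theorem boundedOn_of_tsum_le (hp : 0 < p) (hlam : ∀ v, 0 ≤ lam v) {A : (V → ℂ) → V → ℂ} {K : ℝ}
    (hK : 0 ≤ K) (hA : ∀ f, MemLp' lam p f → MemLp' lam p (A f) ∧
      ∑' v, ‖A f v‖ ^ p * lam v ≤ K * ∑' v, ‖f v‖ ^ p * lam v) : BoundedOn lam p A := by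
  have hsum_nonneg (f : V → ℂ) : 0 ≤ ∑' v, ‖f v‖ ^ p * lam v :=
    tsum_nonneg fun v => mul_nonneg (Real.rpow_nonneg (norm_nonneg _) p) (hlam v)
  refine ⟨K ^ (1 / p), Real.rpow_nonneg hK _, fun f hf => ⟨(hA f hf).1, ?_⟩⟩
  rw [pNorm, pNorm, ← Real.mul_rpow hK (hsum_nonneg f)]
  exact Real.rpow_le_rpow (hsum_nonneg _) (hA f hf).2 (one_div_nonneg.2 hp.le)

end WeightedSpace

section DistToSet

variable {V : Type} {G : SimpleGraph V} {H : Set V}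

theorem exists_mem_distToSet_eq_dist (hH : H.Nonempty) (u : V) :
    ∃ w ∈ H, distToSet G H u = G.dist u w := by
  obtain ⟨w, hw, hdist⟩ := Nat.sInf_mem (hH.image (G.dist u))
  exact ⟨w, hw, hdist.symm⟩

theorem distToSet_le_dist {w : V} (hw : w ∈ H) (u : V) : distToSet G H u ≤ G.dist u w :=
  Nat.sInf_le ⟨w, hw, rfl⟩

theorem distToSet_le_add_one (hG : G.Connected) (hH : H.Nonempty) {u v : V} (huv : G.Adj u v) :
    distToSet G H u ≤ distToSet G H v + 1 := by
  obtain ⟨w, hw, hdist⟩ := exists_mem_distToSet_eq_dist (G := G) hH v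
  calc distToSet G H u ≤ G.dist u w := distToSet_le_dist hw u
    _ ≤ G.dist u v + G.dist v w := hG.dist_triangle
    _ = distToSet G H v + 1 := by rw [SimpleGraph.dist_eq_one_iff_adj.2 huv, hdist, add_comm]

theorem abs_sub_le_dist {V : Type*} {G : SimpleGraph V} (hG : G.Connected)
    {l : V → ℤ} (hl : ∀ u v, G.Adj u v → |l u - l v| ≤ 1) (u v : V) : |l u - l v| ≤ G.dist u v := by
  have hwalk {u v : V} (W : G.Walk u v) : |l u - l v| ≤ W.length := by
    induction W with
    | nil => simp
    | @cons a b c hab W ih =>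
      calc |l a - l c| ≤ |l a - l b| + |l b - l c| := abs_sub_le _ _ _
        _ ≤ 1 + W.length := add_le_add (hl a b hab) ih
        _ = (W.cons hab).length := by rw [SimpleGraph.Walk.length_cons]; push_cast; ring
  obtain ⟨W, hW⟩ := hG.exists_walk_length_eq_dist u v
  exact hW ▸ hwalk W

theorem abs_le_distToSet (hG : G.Connected) (hH : H.Nonempty) {l : V → ℤ}
    (hl : ∀ u v, G.Adj u v → |l u - l v| ≤ 1) (hlH : ∀ w ∈ H, l w = 0) (v : V) :
    |l v| ≤ distToSet G H v := by
  obtain ⟨w, hw, hdist⟩ := exists_mem_distToSet_eq_dist (G := G) hH v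
  simpa only [hlH w hw, sub_zero, hdist] using abs_sub_le_dist hG hl v w

end DistToSet

namespace DirTree

section Parent

variable {V : Type} {T : DirTree V}

/-- The parent of `v`, with junk value `v` at a root; as a total function it can be iterated. -/
noncomputable def parent (T : DirTree V) (v : V) : V :=
  if h : ∃ u, T.E u v then h.choose else v

theorem edge_iff_parent_eq {u v : V} (hv : ¬ T.IsRoot v) : T.E u v ↔ T.parent v = u := by
  have hex : ∃ u, T.E u v := not_forall_not.1 hv
  have hparent : T.E (T.parent v) v := by
    rw [parent, dif_pos hex]
    exact hex.choose_spec
  exact ⟨T.indeg hparent, fun h => h ▸ hparent⟩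

theorem adj_of_edge {u v : V} (huv : T.E u v) : (SimpleGraph.fromRel T.E).Adj v u := by
  refine (SimpleGraph.fromRel_adj _ _ _).2 ⟨?_, Or.inr huv⟩
  rintro rfl
  exact T.noCircuit 0 (fun _ => v) (fun i j _ => Fin.ext (by omega)) (fun i => i.elim0) huv

theorem childN_nonempty (hleafless : ∀ u, ¬ T.IsLeaf u) (n : ℕ) (u : V) :
    (T.childN n u).Nonempty := by
  induction n generalizing u with
  | zero => exact Set.singleton_nonempty u
  | succ n ih =>
    obtain ⟨v, hv⟩ := not_not.1 (hleafless u)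
    obtain ⟨w, hw⟩ := ih v
    exact ⟨w, v, hv, hw⟩

theorem mem_childN_iff (hnoroot : ∀ v, ¬ T.IsRoot v) {n : ℕ} {u v : V} :
    v ∈ T.childN n u ↔ T.parent^[n] v = u := by
  induction n generalizing u with
  | zero => rfl
  | succ n ih =>
    simp only [childN, child, Set.mem_ofPred_eq, ih, edge_iff_parent_eq (hnoroot _),
      Function.iterate_succ_apply']
    exact exists_eq_right'

theorem anc_eq_iterate_parent (hnoroot : ∀ v, ¬ T.IsRoot v) (v : V) (n : ℕ) :
    T.anc v n = T.parent^[n] v := by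
  have hex : ∃ u, v ∈ T.childN n u := ⟨_, (mem_childN_iff hnoroot).2 rfl⟩
  rw [anc, dif_pos hex, ← (mem_childN_iff hnoroot).1 hex.choose_spec]

theorem adj_iff_parent_eq (hnoroot : ∀ v, ¬ T.IsRoot v) {u v : V} :
    (SimpleGraph.fromRel T.E).Adj u v ↔ u ≠ v ∧ (T.parent v = u ∨ T.parent u = v) := by
  rw [SimpleGraph.fromRel_adj, edge_iff_parent_eq (hnoroot v), edge_iff_parent_eq (hnoroot u)]

theorem exists_common_ancestor (hnoroot : ∀ v, ¬ T.IsRoot v) (u v : V) :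
    ∃ m n, T.parent^[m] u = T.parent^[n] v := by
  obtain ⟨W⟩ := T.conn.preconnected u v
  induction W with
  | nil => exact ⟨0, 0, rfl⟩
  | @cons a b c hab W ih =>
    obtain ⟨m, n, hmn⟩ := ih
    obtain rfl | rfl := ((adj_iff_parent_eq hnoroot).1 hab).2
    · refine ⟨m, n + 1, ?_⟩
      rw [Function.iterate_succ_apply', ← hmn, ← Function.iterate_succ_apply' T.parent,
        Function.iterate_succ_apply]
    · exact ⟨m + 1, n, hmn⟩

theorem notMem_periodicPts_parent (hnoroot : ∀ v, ¬ T.IsRoot v) (v : V) :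
    v ∉ Function.periodicPts T.parent := by
  intro hv
  obtain ⟨n, hn⟩ := Nat.exists_eq_succ_of_ne_zero
    (Function.minimalPeriod_pos_of_mem_periodicPts hv).ne'
  have hinj := Function.iterate_injOn_Iio_minimalPeriod (f := T.parent) (x := v)
  -- Parents point against the edges, so the circuit lists the iterates backwards.
  refine T.noCircuit n (fun i => T.parent^[n - i] v) (fun i j hij => ?_) (fun i => ?_) ?_
  · have := hinj (Set.mem_Iio.2 (by omega)) (Set.mem_Iio.2 (by omega)) hij
    omega
  · rw [edge_iff_parent_eq (hnoroot _), ← Function.iterate_succ_apply' T.parent]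
    congr 2
    simp only [Fin.val_castSucc, Fin.val_succ]
    omega
  · rw [edge_iff_parent_eq (hnoroot _), ← Function.iterate_succ_apply' T.parent, Fin.val_last,
      Nat.sub_self, Fin.val_zero, Nat.sub_zero, ← hn]
    exact Function.iterate_minimalPeriod

theorem iterate_parent_injective (hnoroot : ∀ v, ¬ T.IsRoot v) (v : V) :
    Function.Injective fun n => T.parent^[n] v := by
  refine Function.Injective.of_lt_imp_ne fun m n hmn heq =>
    notMem_periodicPts_parent hnoroot (T.parent^[m] v) ⟨n - m, Nat.sub_pos_of_lt hmn, ?_⟩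
  rw [Function.IsPeriodicPt, Function.IsFixedPt, ← Function.iterate_add_apply,
    Nat.sub_add_cancel hmn.le]
  exact heq.symm

end Parent

section Level

variable {V : Type} {T : DirTree V}

/-- The generation of `v` relative to `w`: the value `n - m` whenever `parentᵐ w = parentⁿ v`,
with junk value `0` if there are no such `m` and `n`. -/
noncomputable def level (T : DirTree V) (w v : V) : ℤ :=
  if h : ∃ k : ℕ × ℕ, T.parent^[k.1] w = T.parent^[k.2] v then h.choose.2 - h.choose.1 else 0

/-- The set `H` of vertices sharing an `n`-th ancestor with `w` for some `n`. -/
def generation (T : DirTree V) (w : V) : Set V :=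
  {v | ∃ n, 0 < n ∧ v ∈ T.childN n (T.anc w n)}

theorem level_eq (hnoroot : ∀ v, ¬ T.IsRoot v) {w v : V} {m n : ℕ}
    (hmn : T.parent^[m] w = T.parent^[n] v) : T.level w v = n - m := by
  have hex : ∃ k : ℕ × ℕ, T.parent^[k.1] w = T.parent^[k.2] v := ⟨(m, n), hmn⟩
  set k := hex.choose with hk
  have hk_spec : T.parent^[k.1] w = T.parent^[k.2] v := hex.choose_spec
  have hsum : m + k.2 = n + k.1 := iterate_parent_injective hnoroot w <| by
    calc T.parent^[m + k.2] w = T.parent^[k.2 + n] v := by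
          rw [add_comm, Function.iterate_add_apply, hmn, ← Function.iterate_add_apply]
      _ = T.parent^[n + k.1] w := by
          rw [add_comm, Function.iterate_add_apply, ← hk_spec, ← Function.iterate_add_apply]
  rw [level, dif_pos hex, ← hk]
  omega

theorem level_iterate_parent (hnoroot : ∀ v, ¬ T.IsRoot v) (w v : V) (n : ℕ) :
    T.level w (T.parent^[n] v) = T.level w v - n := by
  obtain ⟨m, k, hmk⟩ := exists_common_ancestor hnoroot w v
  have hn : T.parent^[n + m] w = T.parent^[k] (T.parent^[n] v) := by
    rw [Function.iterate_add_apply, hmk, ← Function.iterate_add_apply, ← Function.iterate_add_apply,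
      add_comm]
  rw [level_eq hnoroot hn, level_eq hnoroot hmk]
  push_cast
  ring

theorem abs_level_sub_level_of_adj (hnoroot : ∀ v, ¬ T.IsRoot v) (w : V) {u v : V}
    (huv : (SimpleGraph.fromRel T.E).Adj u v) : |T.level w u - T.level w v| = 1 := by
  have hparent (x : V) : T.level w (T.parent x) = T.level w x - 1 :=
    level_iterate_parent hnoroot w x 1
  obtain rfl | rfl := ((adj_iff_parent_eq hnoroot).1 huv).2 <;> simp [hparent]

theorem level_eq_zero_of_mem_generation (hnoroot : ∀ v, ¬ T.IsRoot v) {w v : V}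
    (hv : v ∈ T.generation w) : T.level w v = 0 := by
  obtain ⟨n, -, hn⟩ := hv
  rw [mem_childN_iff hnoroot, anc_eq_iterate_parent hnoroot] at hn
  rw [level_eq hnoroot hn.symm, sub_self]

theorem self_mem_generation (hnoroot : ∀ v, ¬ T.IsRoot v) (w : V) : w ∈ T.generation w :=
  ⟨1, one_pos, by rw [mem_childN_iff hnoroot, anc_eq_iterate_parent hnoroot]⟩

theorem abs_level_le_distToSet (hnoroot : ∀ v, ¬ T.IsRoot v) (w v : V) :
    |T.level w v| ≤ distToSet (SimpleGraph.fromRel T.E) (T.generation w) v :=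
  abs_le_distToSet T.conn ⟨w, self_mem_generation hnoroot w⟩
    (fun _ _ huv => (abs_level_sub_level_of_adj hnoroot w huv).le)
    (fun _ => level_eq_zero_of_mem_generation hnoroot) v

theorem tendsto_distToSet_generation (hnoroot : ∀ v, ¬ T.IsRoot v) {w : V} {g : ℕ → V}
    (hg : Tendsto (fun n => |T.level w (g n)|) atTop atTop) :
    Tendsto (fun n => distToSet (SimpleGraph.fromRel T.E) (T.generation w) (g n)) atTop atTop :=
  tendsto_natCast_atTop_iff.1 <|
    tendsto_atTop_mono (fun n => abs_level_le_distToSet hnoroot w (g n)) hg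

theorem tendsto_abs_level_iterate_parent (hnoroot : ∀ v, ¬ T.IsRoot v) (w v : V) :
    Tendsto (fun n => |T.level w (T.parent^[n] v)|) atTop atTop := by
  simp only [level_iterate_parent hnoroot, sub_eq_add_neg]
  exact tendsto_abs_atBot_atTop.comp <| tendsto_atBot_add_const_left _ _ <|
    tendsto_neg_atTop_atBot.comp tendsto_natCast_atTop_atTop

theorem tendsto_abs_level_descendants (hnoroot : ∀ v, ¬ T.IsRoot v) (w : V) {v : V} {g : ℕ → V}
    (hg : ∀ n, T.parent^[n] (g n) = v) : Tendsto (fun n => |T.level w (g n)|) atTop atTop := by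
  have hlevel (n : ℕ) : T.level w (g n) = T.level w v + n := by
    rw [← hg n, level_iterate_parent hnoroot, sub_add_cancel]
  simp only [hlevel]
  exact tendsto_abs_atTop_atTop.comp <| tendsto_atTop_add_const_left _ _ tendsto_natCast_atTop_atTop

end Level

section BackwardShift

variable {V : Type} {T : DirTree V} {lam : V → ℝ} {p : ℝ}

theorem tsum_child {M : Type*} [AddCommMonoid M] [TopologicalSpace M] (F : V → M) (u : V) :
    ∑' v : T.child u, F v = ∑ v ∈ (T.finOut u).toFinset, F v := by
  rw [← Finset.tsum_subtype', Set.Finite.coe_toFinset]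
  rfl

theorem bwd_apply (f : V → ℂ) (u : V) : T.bwd f u = ∑ v ∈ (T.finOut u).toFinset, f v :=
  tsum_child f u

/-- The backward shift as a linear operator on all functions; local finiteness makes the sum over
the children finite. -/
noncomputable def bwdLinear (T : DirTree V) : (V → ℂ) →ₗ[ℂ] V → ℂ where
  toFun := T.bwd
  map_add' f g := by
    funext u
    simp only [bwd_apply, Pi.add_apply, Finset.sum_add_distrib]
  map_smul' c f := by
    funext u
    simp only [bwd_apply, Pi.smul_apply, Finset.smul_sum, RingHom.id_apply]

theorem bwd_single (hnoroot : ∀ v, ¬ T.IsRoot v) (v : V) :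
    T.bwd (Pi.single v 1) = Pi.single (T.parent v) 1 := by
  funext u
  rw [bwd_apply, Finset.sum_pi_single', Pi.single_apply]
  simp only [Set.Finite.mem_toFinset, Set.mem_ofPred_eq, edge_iff_parent_eq (hnoroot v), eq_comm]

theorem iterate_bwd_single (hnoroot : ∀ v, ¬ T.IsRoot v) (n : ℕ) (v : V) :
    T.bwd^[n] (Pi.single v 1) = Pi.single (T.parent^[n] v) 1 :=
  (Function.Semiconj.iterate_right (f := fun v => Pi.single v 1)
    (fun v => (bwd_single hnoroot v).symm) n v).symm

theorem norm_bwd_rpow_le (hp : 1 ≤ p) {r : ℕ} {u : V} (hdeg : (T.child u).ncard ≤ r)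
    (f : V → ℂ) : ‖T.bwd f u‖ ^ p ≤ (r : ℝ) ^ (p - 1) * ∑' v : T.child u, ‖f v‖ ^ p := by
  have hcard : (T.finOut u).toFinset.card ≤ r := by
    rwa [← Set.ncard_eq_toFinset_card _ (T.finOut u)]
  rw [tsum_child fun v => ‖f v‖ ^ p, bwd_apply]
  calc ‖∑ v ∈ (T.finOut u).toFinset, f v‖ ^ p
      ≤ (∑ v ∈ (T.finOut u).toFinset, ‖f v‖) ^ p :=
        Real.rpow_le_rpow (norm_nonneg _) (norm_sum_le _ _) (zero_le_one.trans hp)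
    _ ≤ ((T.finOut u).toFinset.card : ℝ) ^ (p - 1) * ∑ v ∈ (T.finOut u).toFinset, ‖f v‖ ^ p :=
        Real.rpow_sum_le_const_mul_sum_rpow_of_nonneg _ hp fun v _ => norm_nonneg (f v)
    _ ≤ (r : ℝ) ^ (p - 1) * ∑ v ∈ (T.finOut u).toFinset, ‖f v‖ ^ p := by
        gcongr

theorem sigma_child_injective :
    Function.Injective fun x : Σ u, T.child u => (x.2 : V) := by
  rintro ⟨u, v, hv⟩ ⟨u', v', hv'⟩ rfl
  obtain rfl := T.indeg hv hv'
  rfl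

theorem summable_tsum_child {F : V → ℝ} (hF : Summable F) :
    Summable fun u => ∑' v : T.child u, F v :=
  (hF.comp_injective sigma_child_injective).sigma

theorem tsum_tsum_child_le {F : V → ℝ} (hF : Summable F) (hF0 : ∀ v, 0 ≤ F v) :
    ∑' u, ∑' v : T.child u, F v ≤ ∑' v, F v :=
  (hF.comp_injective (sigma_child_injective (T := T))).tsum_sigma.symm.trans_le <|
    tsum_comp_le_tsum_of_inj hF hF0 sigma_child_injective

theorem boundedOn_bwd (hp : 1 ≤ p) (hlam : ∀ v, 0 ≤ lam v) {r : ℕ}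
    (hdeg : ∀ u, (T.child u).ncard ≤ r) {C : ℝ} (hC : 0 ≤ C)
    (hlamC : ∀ u v, T.E u v → lam u ≤ C * lam v) : BoundedOn lam p T.bwd := by
  have hK : 0 ≤ (r : ℝ) ^ (p - 1) * C := by positivity
  refine boundedOn_of_tsum_le (one_pos.trans_le hp) hlam hK fun f hf => ?_
  have hnonneg (g : V → ℂ) (v : V) : 0 ≤ ‖g v‖ ^ p * lam v :=
    mul_nonneg (Real.rpow_nonneg (norm_nonneg _) p) (hlam v)
  have hpoint (u : V) : ‖T.bwd f u‖ ^ p * lam u ≤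
      (r : ℝ) ^ (p - 1) * C * ∑' v : T.child u, ‖f v‖ ^ p * lam v := by
    have : Finite (T.child u) := T.finOut u
    calc ‖T.bwd f u‖ ^ p * lam u
        ≤ (r : ℝ) ^ (p - 1) * (∑' v : T.child u, ‖f v‖ ^ p) * lam u :=
          mul_le_mul_of_nonneg_right (norm_bwd_rpow_le hp (hdeg u) f) (hlam u)
      _ = (r : ℝ) ^ (p - 1) * ∑' v : T.child u, ‖f v‖ ^ p * lam u := by
          rw [mul_assoc, tsum_mul_right]
      _ ≤ (r : ℝ) ^ (p - 1) * ∑' v : T.child u, C * (‖f v‖ ^ p * lam v) := by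
          refine mul_le_mul_of_nonneg_left (Summable.tsum_le_tsum (fun v => ?_)
            .of_finite .of_finite) (by positivity)
          rw [mul_left_comm]
          exact mul_le_mul_of_nonneg_left (hlamC u v v.2) (by positivity)
      _ = (r : ℝ) ^ (p - 1) * C * ∑' v : T.child u, ‖f v‖ ^ p * lam v := by
          rw [tsum_mul_left, mul_assoc]
  have hsum := (summable_tsum_child (T := T) hf).mul_left ((r : ℝ) ^ (p - 1) * C)
  have hmem : MemLp' lam p (T.bwd f) := hsum.of_nonneg_of_le (hnonneg _) hpoint
  refine ⟨hmem, (hmem.tsum_le_tsum hpoint hsum).trans ?_⟩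
  rw [tsum_mul_left]
  exact mul_le_mul_of_nonneg_left (tsum_tsum_child_le hf (hnonneg f)) hK

theorem hypercyclic_bwd_of_tendsto_weight [Countable V] (hp : 1 ≤ p) (hlam : ∀ v, 0 < lam v)
    (hnoroot : ∀ v, ¬ T.IsRoot v) (hbdd : BoundedOn lam p T.bwd)
    (hanc : ∀ v, Tendsto (fun n => lam (T.parent^[n] v)) atTop (𝓝 0))
    (hdesc : ∀ v, ∃ g : ℕ → V, (∀ n, T.parent^[n] (g n) = v) ∧
      Tendsto (fun n => lam (g n)) atTop (𝓝 0)) :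
    Hypercyclic lam p T.bwd := by
  have hp0 : 0 < p := one_pos.trans_le hp
  refine hypercyclic_of_tendsto_pNorm_single (A := T.bwdLinear) hp hlam hbdd (fun v => ?_)
    fun v => ?_
  · change Tendsto (fun n => pNorm lam p (T.bwd^[n] _)) _ _
    simpa only [iterate_bwd_single hnoroot] using tendsto_pNorm_single hp0 (hanc v)
  · obtain ⟨g, hg, hg_lim⟩ := hdesc v
    exact ⟨fun n => Pi.single (g n) 1, fun n => memLp'_single hp0.ne' (g n),
      tendsto_pNorm_single hp0 hg_lim,
      fun n => (iterate_bwd_single hnoroot n (g n)).trans (by rw [hg])⟩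

end BackwardShift

end DirTree

theorem inv_pow_le_mul_inv_pow {s : ℝ} (hs : 1 ≤ s) {m n : ℕ} (hmn : n ≤ m + 1) :
    (s ^ m)⁻¹ ≤ s * (s ^ n)⁻¹ := by
  have hs0 : 0 < s := one_pos.trans_le hs
  rw [← div_eq_mul_inv, inv_le_iff_one_le_mul₀ (pow_pos hs0 m), div_mul_eq_mul_div, ← pow_succ',
    one_le_div (pow_pos hs0 n)]
  exact pow_le_pow_right₀ hs hmn

theorem tendsto_inv_pow_zero {s : ℝ} (hs : 1 < s) {d : ℕ → ℕ} (hd : Tendsto d atTop atTop) :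
    Tendsto (fun n => (s ^ d n)⁻¹) atTop (𝓝 0) :=
  tendsto_inv_atTop_zero.comp ((tendsto_pow_atTop_atTop_of_one_lt hs).comp hd)

theorem stmt_15_general {V : Type} [Countable V] (T : DirTree V) {q : ℝ} (hq : 1 ≤ q) {r : ℕ}
    {s : ℝ} (hs : 1 < s) (hnoroot : ∀ v, ¬ T.IsRoot v) (hleafless : ∀ u, ¬ T.IsLeaf u)
    (hdeg : ∀ u, (T.child u).ncard ≤ r) (w : V) :
    Hypercyclic
      (fun u => (s ^ distToSet (SimpleGraph.fromRel T.E) (T.generation w) u)⁻¹) q T.bwd := by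
  have hs0 : 0 < s := one_pos.trans hs
  have hH : (T.generation w).Nonempty := ⟨w, DirTree.self_mem_generation hnoroot w⟩
  refine DirTree.hypercyclic_bwd_of_tendsto_weight hq (fun u => by positivity) hnoroot
    (DirTree.boundedOn_bwd hq (fun u => by positivity) hdeg hs0.le fun u v huv => ?_)
    (fun v => ?_) fun v => ?_
  · exact inv_pow_le_mul_inv_pow hs.le
      (distToSet_le_add_one T.conn hH (DirTree.adj_of_edge huv))
  · exact tendsto_inv_pow_zero hs <| DirTree.tendsto_distToSet_generation hnoroot <|
      DirTree.tendsto_abs_level_iterate_parent hnoroot w v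
  · choose g hg using fun n => DirTree.childN_nonempty hleafless n v
    have hgv (n : ℕ) := (DirTree.mem_childN_iff hnoroot).1 (hg n)
    exact ⟨g, hgv, tendsto_inv_pow_zero hs <| DirTree.tendsto_distToSet_generation hnoroot <|
      DirTree.tendsto_abs_level_descendants hnoroot w hgv⟩

/-- Let `r ∈ ℕ` and `s > r^{q-1}`. On the unrooted leafless
directed tree in which every vertex has outdegree `r`, with weights
`λ_u = s^{-dist(u,H)}` where `H` is the set of vertices sharing a common
`n`-ancestor with a fixed vertex `w*`, the backward shift `B` on `L^q(T,λ)` is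
hypercyclic. -/
theorem stmt_15 {V : Type} [Countable V] [Infinite V] (T : DirTree V)
    (q : ℝ) (hq : 1 ≤ q) (r : ℕ) (s : ℝ) (hs : (r : ℝ) ^ (q - 1) < s)
    (hnoroot : ∀ v : V, ¬ T.IsRoot v) (hleafless : ∀ u : V, ¬ T.IsLeaf u)
    (hdeg : ∀ u : V, (T.child u).ncard = r)
    (wstar : V) :
    Hypercyclic
      (fun u : V =>
        (s ^ distToSet (SimpleGraph.fromRel T.E)
            {w : V | ∃ n : ℕ, 0 < n ∧ w ∈ T.childN n (T.anc wstar n)} u)⁻¹)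
      q T.bwd := by
  have hr : 1 ≤ r := by
    rw [← hdeg wstar]
    exact (Set.ncard_pos (T.finOut wstar)).2 (not_not.1 (hleafless wstar))
  have hs1 : 1 < s := (Real.one_le_rpow (Nat.one_le_cast.2 hr) (sub_nonneg.2 hq)).trans_lt hs
  exact stmt_15_general T hq hs1 hnoroot hleafless (fun u => (hdeg u).le) wstar
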